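/- arXiv:0902.3419 — 2 statements merged into one kernel-verified Lean document; each statement's English description precedes it below -/
import Mathlib

section
/- Under the stated assumptions including non-periodicity, for every odd integer k ≥ 1 the Dirichlet series D_3(s) = Σ_{n≥1} b_k(n) (log n)^{k/2} n^{−s} converges absolutely for Re(s) > ρ and satisfies, for complex w with Re(w) > 0 and |w| sufficiently small, the bound D_3(ρ + w) = O(|w|^{−k−1/2}); in particular D_3(ρ + w) = o(|w|^{−k−1}) as w → 0 within Re(w) > 0. -/
open scoped BigOperators ENNReal
open Filter Asymptotics

noncomputable section

/-- `af P m n` is the number of ordered `m`-tuples `(n₁,…,n_m)` of elements of `P`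
with product `n` (so `af P 0 n = 1` iff `n = 1`). -/
def af (P : Set ℕ) (m n : ℕ) : ℕ :=
  Nat.card {t : Fin m → ℕ // (∀ i, t i ∈ P) ∧ ∏ i, t i = n}

/-- `aTot P n = a(n) = Σ_{m ≥ 0} a_m(n)`. -/
def aTot (P : Set ℕ) (n : ℕ) : ℝ := ∑' m : ℕ, (af P m n : ℝ)

/-- `Acum P N = A(N) = Σ_{1 ≤ n ≤ N} a(n)`. -/
def Acum (P : Set ℕ) (N : ℕ) : ℝ := ∑ n ∈ Finset.Icc 1 N, aTot P n

/-- The Dirichlet series `𝒫(x) = Σ_{n ∈ 𝒫} n^{-x}` at a real point. -/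
def Pval (P : Set ℕ) (x : ℝ) : ℝ := ∑' n : P, ((n : ℕ) : ℝ) ^ (-x)

/-- `𝒫'(x) = -Σ_{n ∈ 𝒫} n^{-x} log n`. -/
def Pderiv1 (P : Set ℕ) (x : ℝ) : ℝ := -∑' n : P, ((n : ℕ) : ℝ) ^ (-x) * Real.log (n : ℕ)

/-- `𝒫''(x) = Σ_{n ∈ 𝒫} n^{-x} (log n)^2`. -/
def Pderiv2 (P : Set ℕ) (x : ℝ) : ℝ := ∑' n : P, ((n : ℕ) : ℝ) ^ (-x) * (Real.log (n : ℕ)) ^ 2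

/-- The abscissa of convergence `κ` of the Dirichlet series of `P`, as an extended real
(`⊥` when `P` is finite). -/
def kappa (P : Set ℕ) : EReal :=
  sInf {x : EReal | ∃ r : ℝ, x = (r : EReal) ∧ Summable (fun n : P => ((n : ℕ) : ℝ) ^ (-r))}

open Classical in
/-- The (possibly infinite) value `𝒫(x) ∈ (0,∞]` of the Dirichlet series at an
extended-real point; at `x = -∞` every term `n^{-x}` is infinite. -/
def PvalE (P : Set ℕ) (x : EReal) : ℝ≥0∞ :=
  if x = ⊥ then ⊤ else ∑' n : P, ENNReal.ofReal (((n : ℕ) : ℝ) ^ (-x.toReal))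

/-- `b_k(n) = Σ_{m ≥ 0} a_m(n) (m - μ log n)^k`. -/
def bCoef (P : Set ℕ) (μ : ℝ) (k n : ℕ) : ℝ :=
  ∑' m : ℕ, (af P m n : ℝ) * ((m : ℝ) - μ * Real.log n) ^ k

/-- `D₃(s) = Σ_{n ≥ 1} b_k(n) (log n)^{k/2} n^{-s}`. -/
def D3 (P : Set ℕ) (μ : ℝ) (k : ℕ) (s : ℂ) : ℂ :=
  ∑' n : ℕ, ((bCoef P μ k n * (Real.log n) ^ ((k : ℝ) / 2) : ℝ) : ℂ) * (n : ℂ) ^ (-s)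

/-!
Ordered factorisations into elements of `P` are words over the alphabet `P`, so `D₃` is a Dirichlet
series over words, with the logarithm of the product as length and `m - μ log n` as the sum of the
marks `1 - μ log nᵢ`. The choice of `ρ` makes the letter weights `n^{-ρ}` a probability law, and the
choice of `μ` makes the marks centred under it.

Let `H_{k,j}(s)` be the sum over words of `(mark)^k (length)^j e^{-s length}` and `p_{a,b}(s)` the
same sum over letters. Splitting off the first letter and expanding binomially expresses
`(1 - p_{0,0}) H_{k,j}` through the products `p_{a,b} H_{k-a,j-b}` with `(a, b) ≠ (0, 0)`. Since
`1 - p_{0,0}` has a simple zero at `ρ`, a single mark would cost a whole power of `1/w`, were it not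
that `p_{1,0}(ρ) = 0`: marks cost a power only in pairs, and by induction
`H_{k,j}(ρ + w) = O(|w|^{-(⌊k/2⌋ + j + 1)})`.

Real powers of the length come from `Γ(γ) L^{-γ} = ∫₀^∞ t^{γ-1} e^{-tL} dt`, which writes the series
with `L^{j-γ}` as the Mellin transform of `t ↦ H_{k,j}(s + t)` and lowers the order of growth by
`γ`. For `k` odd and `j - γ = k/2` the exponent is `⌊k/2⌋ + k/2 + 1 = k + 1/2`.
-/

section ListSums

theorem ennreal_tsum_fin_prod {ι : Type*} (f : ι → ℝ≥0∞) (m : ℕ) :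
    ∑' v : Fin m → ι, ∏ i, f (v i) = (∑' i, f i) ^ m := by
  induction m with
  | zero => simp
  | succ m ih =>
    rw [← (Fin.consEquiv fun _ => ι).tsum_eq, ENNReal.tsum_prod', pow_succ', ← ih,
      ← ENNReal.tsum_mul_right]
    simp [Fin.consEquiv, Fin.prod_univ_succ, ENNReal.tsum_mul_left]

theorem ennreal_tsum_list_prod {ι : Type*} (f : ι → ℝ≥0∞) :
    ∑' l : List ι, (l.map f).prod = (1 - ∑' i, f i)⁻¹ := by
  rw [← List.equivSigmaTuple.symm.tsum_eq, ENNReal.tsum_sigma', ← ENNReal.tsum_geometric]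
  simp [List.equivSigmaTuple, List.map_ofFn, List.prod_ofFn, ennreal_tsum_fin_prod]

theorem summable_list_prod {ι : Type*} {f : ι → ℝ} (hf : ∀ i, 0 ≤ f i) (hs : Summable f)
    (h1 : ∑' i, f i < 1) : Summable fun l : List ι => (l.map f).prod := by
  have htop : ∑' l : List ι, (l.map fun i => ENNReal.ofReal (f i)).prod ≠ ⊤ := by
    rw [ennreal_tsum_list_prod, ← ENNReal.ofReal_tsum_of_nonneg hf hs, ENNReal.inv_ne_top]
    exact (tsub_pos_of_lt (by simpa using h1)).ne'
  refine (ENNReal.summable_toReal htop).congr fun l => ?_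
  induction l with
  | nil => simp
  | cons i l ih => simp [ENNReal.toReal_mul, ENNReal.toReal_ofReal (hf i), ih]

theorem tsum_list_eq_nil_add_cons {ι E : Type*} [AddCommGroup E] [TopologicalSpace E]
    [IsTopologicalAddGroup E] [T2Space E] {f : List ι → E} (hf : Summable f) :
    ∑' l, f l = f [] + ∑' p : ι × List ι, f (p.1 :: p.2) := by
  classical
  have hinj : Function.Injective fun p : ι × List ι => p.1 :: p.2 := by
    rintro ⟨i, l⟩ ⟨i', l'⟩ h
    simpa using h
  rw [hf.tsum_eq_add_tsum_ite [], ← hinj.tsum_eq]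
  · simp
  · rintro (_ | ⟨i, l⟩) hl
    · simp at hl
    · exact ⟨(i, l), rfl⟩

end ListSums

/-- The additive extension to words of a function `x` on letters: the sum of `x` over the letters
of `l`. Applied to marks and to lengths it gives the mark and the length of a word. -/
def wordSum {ι : Type*} (x : ι → ℝ) (l : List ι) : ℝ := (l.map x).sum

section wordSum

variable {ι : Type*} {x lam : ι → ℝ}

@[simp]
theorem wordSum_nil : wordSum x [] = 0 := rfl

@[simp]
theorem wordSum_cons (i : ι) (l : List ι) : wordSum x (i :: l) = x i + wordSum x l := by
  simp [wordSum]

theorem wordSum_nonneg (h : ∀ i, 0 ≤ lam i) (l : List ι) : 0 ≤ wordSum lam l :=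
  List.sum_nonneg (by simp [h])

theorem abs_wordSum_le {B : ℝ} (h : ∀ i, |x i| ≤ B * lam i) (l : List ι) :
    |wordSum x l| ≤ B * wordSum lam l := by
  induction l with
  | nil => simp
  | cons i l ih =>
    rw [wordSum_cons, wordSum_cons, mul_add]
    exact (abs_add_le _ _).trans (add_le_add (h i) ih)

theorem wordSum_eq_zero_or_le {c : ℝ} (hc : 0 ≤ c) (h : ∀ i, c ≤ lam i) (l : List ι) :
    wordSum lam l = 0 ∨ c ≤ wordSum lam l := by
  rcases l with _ | ⟨i, l⟩
  · exact .inl rfl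
  · refine .inr ?_
    rw [wordSum_cons]
    linarith [h i, wordSum_nonneg (fun i => hc.trans (h i)) l]

theorem exp_mul_wordSum (σ : ℝ) (l : List ι) :
    Real.exp (σ * wordSum lam l) = (l.map fun i => Real.exp (σ * lam i)).prod := by
  induction l with
  | nil => simp
  | cons i l ih => simp [mul_add, Real.exp_add, ih]

theorem summable_exp_neg_mul_wordSum {ρ σ : ℝ} (h : ∀ i, 0 < lam i)
    (h1 : HasSum (fun i => Real.exp (-ρ * lam i)) 1) (hσ : ρ < σ) :
    Summable fun l => Real.exp (-σ * wordSum lam l) := by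
  have hlt (i : ι) : Real.exp (-σ * lam i) < Real.exp (-ρ * lam i) :=
    Real.exp_lt_exp.2 (by nlinarith [h i])
  have hs : Summable fun i => Real.exp (-σ * lam i) :=
    h1.summable.of_nonneg_of_le (fun _ => (Real.exp_pos _).le) fun i => (hlt i).le
  have : Nonempty ι := not_isEmpty_iff.1 fun _ => by simpa using h1.tsum_eq
  simp_rw [exp_mul_wordSum]
  refine summable_list_prod (fun _ => (Real.exp_pos _).le) hs ?_
  rw [← h1.tsum_eq]
  exact hs.tsum_lt_tsum (fun i => (hlt i).le) (hlt (Classical.arbitrary ι)) h1.summable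

end wordSum

/-- The term `x(a)^k y(a)^β e^{-s y(a)}` of a general Dirichlet series with frequencies `y` and
coefficients `x^k y^β`. For `y(a) = 0` the factor `y(a)^β` is `1` if `β = 0` and `0` otherwise. -/
def dirichletTerm {α : Type*} (x y : α → ℝ) (k : ℕ) (β : ℝ) (s : ℂ) (a : α) : ℂ :=
  (x a : ℂ) ^ k * ((y a ^ β : ℝ) : ℂ) * Complex.exp (-s * y a)

/-- The general Dirichlet series `∑ₐ x(a)^k y(a)^β e^{-s y(a)}`, used both for letters and for
words. Differentiating in `s` raises `β` by one. -/
def dirichletSeries {α : Type*} (x y : α → ℝ) (k : ℕ) (β : ℝ) (s : ℂ) : ℂ :=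
  ∑' a, dirichletTerm x y k β s a

section DirichletSeries

variable {α : Type*} {x y : α → ℝ} {B r β : ℝ} {k : ℕ} {s : ℂ}

theorem norm_dirichletTerm (k : ℕ) (β : ℝ) (s : ℂ) {a : α} (hy : 0 ≤ y a) :
    ‖dirichletTerm x y k β s a‖ = |x a| ^ k * y a ^ β * Real.exp (-s.re * y a) := by
  simp [dirichletTerm, Complex.norm_exp, abs_of_nonneg (Real.rpow_nonneg hy β)]

theorem norm_dirichletTerm_le_mul_exp {c σ : ℝ} (hσ : σ ≤ s.re) (hβ : β ≠ 0) {a : α}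
    (hy : 0 ≤ y a) (hgap : y a = 0 ∨ c ≤ y a) :
    ‖dirichletTerm x y k β s a‖ ≤ ‖dirichletTerm x y k β σ a‖ * Real.exp (-c * (s.re - σ)) := by
  rcases hgap with h0 | hc
  · simp [dirichletTerm, h0, Real.zero_rpow hβ]
  · rw [norm_dirichletTerm _ _ _ hy, norm_dirichletTerm _ _ _ hy, Complex.ofReal_re,
      mul_assoc _ (Real.exp _), ← Real.exp_add]
    gcongr
    nlinarith [mul_nonneg (sub_nonneg.2 hc) (sub_nonneg.2 hσ)]

theorem norm_dirichletTerm_anti {σ : ℝ} (hσ : σ ≤ s.re) {a : α} (hy : 0 ≤ y a) :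
    ‖dirichletTerm x y k β s a‖ ≤ ‖dirichletTerm x y k β σ a‖ := by
  rw [norm_dirichletTerm _ _ _ hy, norm_dirichletTerm _ _ _ hy, Complex.ofReal_re]
  gcongr

theorem summable_norm_dirichletTerm (hy : ∀ a, 0 ≤ y a) (hx : ∀ a, |x a| ≤ B * y a)
    (hs : Summable fun a => Real.exp (-r * y a)) (k : ℕ) (hβ : 0 ≤ β) (hr : r < s.re) :
    Summable fun a => ‖dirichletTerm x y k β s a‖ := by
  set ε := s.re - r with hε
  have hε0 : 0 < ε := sub_pos.2 hr
  refine (hs.mul_left (|B| ^ k * ((k + β) / ε) ^ (k + β))).of_nonneg_of_le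
    (fun _ => norm_nonneg _) fun a => ?_
  have hxa : |x a| ≤ |B| * y a :=
    (hx a).trans (mul_le_mul_of_nonneg_right (le_abs_self B) (hy a))
  have hpow : y a ^ (k + β) ≤ ((k + β) / ε) ^ (k + β) * Real.exp (ε * y a) := by
    simpa only [abs_of_nonneg (hy a), abs_of_pos hε0] using
      ProbabilityTheory.rpow_abs_le_mul_exp_abs (y a) (by positivity : 0 ≤ k + β) hε0.ne'
  calc ‖dirichletTerm x y k β s a‖
      = |x a| ^ k * y a ^ β * Real.exp (-s.re * y a) := norm_dirichletTerm _ _ _ (hy a)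
    _ ≤ (|B| * y a) ^ k * y a ^ β * Real.exp (-s.re * y a) := by
      have := Real.rpow_nonneg (hy a) β
      gcongr
    _ = |B| ^ k * y a ^ (k + β) * Real.exp (-s.re * y a) := by
      rw [Real.rpow_add_of_nonneg (hy a) k.cast_nonneg hβ, Real.rpow_natCast]
      ring
    _ ≤ |B| ^ k * (((k + β) / ε) ^ (k + β) * Real.exp (ε * y a)) * Real.exp (-s.re * y a) := by
      gcongr
    _ = |B| ^ k * ((k + β) / ε) ^ (k + β) * Real.exp (-r * y a) := by
      rw [← mul_assoc, mul_assoc, ← Real.exp_add, hε]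
      ring_nf

theorem hasDerivAt_dirichletTerm (hβ : 0 ≤ β) {a : α} (hy : 0 ≤ y a) :
    HasDerivAt (fun s => dirichletTerm x y k β s a) (-dirichletTerm x y k (β + 1) s a) s := by
  have hexp : HasDerivAt (fun s : ℂ => Complex.exp (-s * y a))
      (Complex.exp (-s * y a) * (-1 * y a)) s :=
    ((hasDerivAt_neg s).mul_const _).cexp
  convert! hexp.const_mul ((x a : ℂ) ^ k * ((y a ^ β : ℝ) : ℂ)) using 1
  rw [dirichletTerm, Real.rpow_add_one' hy (by positivity)]
  push_cast
  ring

theorem hasDerivAt_dirichletSeries (hy : ∀ a, 0 ≤ y a) (hx : ∀ a, |x a| ≤ B * y a)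
    (hs : Summable fun a => Real.exp (-r * y a)) (k : ℕ) (hβ : 0 ≤ β) (hr : r < s.re) :
    HasDerivAt (dirichletSeries x y k β) (-dirichletSeries x y k (β + 1) s) s := by
  obtain ⟨σ, hrσ, hσs⟩ := exists_between hr
  have hβ1 : 0 ≤ β + 1 := by positivity
  rw [dirichletSeries, ← tsum_neg]
  have hs_mem : s ∈ {z : ℂ | σ < z.re} := hσs
  refine hasDerivAt_tsum_of_isPreconnected
    (summable_norm_dirichletTerm (s := σ) hy hx hs k hβ1 (by simpa using hrσ))
    (isOpen_lt continuous_const Complex.continuous_re) (convex_halfSpace_re_gt σ).isPreconnected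
    (fun a z _ => hasDerivAt_dirichletTerm hβ (hy a)) (fun a z hz => ?_) hs_mem
    (summable_norm_dirichletTerm hy hx hs k hβ hr).of_norm hs_mem
  rw [norm_neg]
  exact norm_dirichletTerm_anti (le_of_lt hz) (hy a)

theorem exists_norm_dirichletSeries_le_mul_exp {c σ : ℝ} (hy : ∀ a, 0 ≤ y a)
    (hgap : ∀ a, y a = 0 ∨ c ≤ y a) (hβ : β ≠ 0)
    (hs : Summable fun a => ‖dirichletTerm x y k β σ a‖) :
    ∃ S, ∀ s : ℂ, σ ≤ s.re → ‖dirichletSeries x y k β s‖ ≤ S * Real.exp (-c * (s.re - σ)) :=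
  ⟨_, fun _ hσ => tsum_of_norm_bounded (hs.hasSum.mul_right _) fun a =>
    norm_dirichletTerm_le_mul_exp hσ hβ (hy a) (hgap a)⟩

end DirichletSeries

section LetterExpansion

variable {ι : Type*} {x lam : ι → ℝ}

theorem dirichletTerm_wordSum_cons (k j : ℕ) (s : ℂ) (i : ι) (l : List ι) :
    dirichletTerm (wordSum x) (wordSum lam) k j s (i :: l) =
      ∑ p ∈ Finset.range (k + 1) ×ˢ Finset.range (j + 1), (k.choose p.1 * j.choose p.2 : ℂ) *
        (dirichletTerm x lam p.1 p.2 s i *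
          dirichletTerm (wordSum x) (wordSum lam) (k - p.1) (j - p.2 : ℕ) s l) := by
  simp only [dirichletTerm, wordSum_cons, Real.rpow_natCast]
  push_cast
  rw [mul_add, Complex.exp_add, add_pow, add_pow, Finset.sum_mul_sum, ← Finset.sum_product',
    Finset.sum_mul]
  exact Finset.sum_congr rfl fun p _ => by ring

theorem one_sub_mul_dirichletSeries_wordSum {k j : ℕ} {s : ℂ}
    (hletter : ∀ a b : ℕ, Summable fun i => ‖dirichletTerm x lam a b s i‖)
    (hword : ∀ a b : ℕ, Summable fun l => ‖dirichletTerm (wordSum x) (wordSum lam) a b s l‖) :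
    (1 - dirichletSeries x lam 0 0 s) * dirichletSeries (wordSum x) (wordSum lam) k j s =
      dirichletTerm (wordSum x) (wordSum lam) k j s [] +
        ∑ p ∈ (Finset.range (k + 1) ×ˢ Finset.range (j + 1)).erase (0, 0),
          (k.choose p.1 * j.choose p.2 : ℂ) * (dirichletSeries x lam p.1 p.2 s *
            dirichletSeries (wordSum x) (wordSum lam) (k - p.1) (j - p.2 : ℕ) s) := by
  have hexpand : dirichletSeries (wordSum x) (wordSum lam) k j s =
      dirichletTerm (wordSum x) (wordSum lam) k j s [] +
        ∑ p ∈ Finset.range (k + 1) ×ˢ Finset.range (j + 1),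
          (k.choose p.1 * j.choose p.2 : ℂ) * (dirichletSeries x lam p.1 p.2 s *
            dirichletSeries (wordSum x) (wordSum lam) (k - p.1) (j - p.2 : ℕ) s) := by
    rw [dirichletSeries, tsum_list_eq_nil_add_cons (hword k j).of_norm]
    simp_rw [dirichletTerm_wordSum_cons]
    rw [Summable.tsum_finsetSum fun p _ =>
      (summable_mul_of_summable_norm (hletter _ _) (hword _ _)).mul_left _]
    simp_rw [tsum_mul_left, dirichletSeries,
      tsum_mul_tsum_of_summable_norm (hletter _ _) (hword _ _)]
  rw [sub_mul, one_mul, sub_eq_iff_eq_add]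
  nth_rw 1 [hexpand]
  rw [add_assoc, ← Finset.sum_erase_add _ _ (show (0, 0) ∈ _ by simp)]
  simp

end LetterExpansion

theorem dirichletSeries_ofReal {α : Type*} (x y : α → ℝ) (k : ℕ) (β σ : ℝ) :
    dirichletSeries x y k β σ = ((∑' a, x a ^ k * y a ^ β * Real.exp (-σ * y a) : ℝ) : ℂ) := by
  simp only [dirichletSeries, dirichletTerm, Complex.ofReal_tsum]
  push_cast
  rfl

/-- The filter of one-sided neighbourhoods of `0` in the open right half plane. -/
abbrev rightHalfPlaneNhds : Filter ℂ := nhdsWithin 0 {w : ℂ | 0 < w.re}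

theorem rightHalfPlaneNhds_le_nhdsNE : rightHalfPlaneNhds ≤ nhdsWithin 0 {0}ᶜ :=
  nhdsWithin_mono _ fun w (hw : 0 < w.re) h0 => by simp_all

theorem isBigO_inv_pow_inv_pow {m n : ℕ} (h : m ≤ n) :
    (fun w : ℂ => w⁻¹ ^ m) =O[rightHalfPlaneNhds] fun w => w⁻¹ ^ n :=
  ((isBigO_pow_pow_cobounded_of_le h).comp_tendsto tendsto_inv₀_nhdsNE_zero).mono
    rightHalfPlaneNhds_le_nhdsNE

theorem isLittleO_norm_rpow_norm_rpow {p q : ℝ} (hpq : p < q) :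
    (fun w : ℂ => ‖w‖ ^ q) =o[rightHalfPlaneNhds] fun w => ‖w‖ ^ p := by
  have hpow : (fun w : ℂ => ‖w‖ ^ (q - p) * ‖w‖ ^ p)
      =ᶠ[rightHalfPlaneNhds] fun w => ‖w‖ ^ q := by
    filter_upwards [rightHalfPlaneNhds_le_nhdsNE self_mem_nhdsWithin] with w hw
    rw [← Real.rpow_add (norm_pos_iff.2 hw), sub_add_cancel]
  have hzero : Tendsto (fun w : ℂ => ‖w‖ ^ (q - p)) rightHalfPlaneNhds (nhds 0) :=
    ((Real.continuousAt_rpow_const 0 _ (.inr (sub_pos.2 hpq).le)).tendsto.comp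
      tendsto_norm_zero).mono_left nhdsWithin_le_nhds |>.trans (by simp [(sub_pos.2 hpq).ne'])
  simpa using hpow.symm.trans_isLittleO
    (((isLittleO_one_iff ℝ).2 hzero).mul_isBigO (isBigO_refl (fun w : ℂ => ‖w‖ ^ p) _))

theorem exists_forall_norm_le_of_isBigO {F : ℂ → ℂ} {p : ℝ}
    (h : F =O[rightHalfPlaneNhds] fun w => ‖w‖ ^ p) :
    ∃ C δ : ℝ, 0 < C ∧ 0 < δ ∧ ∀ w : ℂ, 0 < w.re → ‖w‖ < δ → ‖F w‖ ≤ C * ‖w‖ ^ p := by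
  obtain ⟨C, hC, hbound⟩ := h.exists_pos
  rw [isBigOWith_iff, eventually_nhdsWithin_iff, Metric.eventually_nhds_iff] at hbound
  obtain ⟨δ, hδ, hbound⟩ := hbound
  refine ⟨C, δ, hC, hδ, fun w hw hwδ => ?_⟩
  simpa [abs_of_nonneg (Real.rpow_nonneg (norm_nonneg w) p)] using
    hbound (by simpa using hwδ) hw

section RenewalRecurrence

variable {ι : Type*} {x lam : ι → ℝ} {B r ρ : ℝ}

theorem hasDerivAt_dirichletSeries_add (hlam : ∀ i, 0 ≤ lam i) (hx : ∀ i, |x i| ≤ B * lam i)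
    (hs : Summable fun i => Real.exp (-r * lam i)) (hr : r < ρ) (k j : ℕ) :
    HasDerivAt (fun w : ℂ => dirichletSeries x lam k j (ρ + w))
      (-dirichletSeries x lam k (j + 1) ρ) 0 :=
  HasDerivAt.comp_const_add _ _ <| by
    simpa using hasDerivAt_dirichletSeries (s := ρ) hlam hx hs k j.cast_nonneg (by simpa using hr)

theorem isBigO_dirichletSeries_one (hlam : ∀ i, 0 ≤ lam i) (hx : ∀ i, |x i| ≤ B * lam i)
    (hs : Summable fun i => Real.exp (-r * lam i)) (hr : r < ρ) (k j : ℕ) :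
    (fun w : ℂ => dirichletSeries x lam k j (ρ + w)) =O[rightHalfPlaneNhds] fun _ => (1 : ℂ) :=
  ((hasDerivAt_dirichletSeries_add hlam hx hs hr k j).continuousAt.tendsto.isBigO_one ℂ).mono
    nhdsWithin_le_nhds

theorem isBigO_dirichletSeries_id (hlam : ∀ i, 0 ≤ lam i) (hx : ∀ i, |x i| ≤ B * lam i)
    (hs : Summable fun i => Real.exp (-r * lam i)) (hr : r < ρ)
    (hcentred : HasSum (fun i => x i * Real.exp (-ρ * lam i)) 0) :
    (fun w : ℂ => dirichletSeries x lam 1 0 (ρ + w)) =O[rightHalfPlaneNhds] fun w => w := by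
  have h0 : dirichletSeries x lam 1 0 ρ = 0 := by
    simp only [dirichletSeries_ofReal, pow_one, Real.rpow_zero, mul_one, hcentred.tsum_eq,
      Complex.ofReal_zero]
  have h := (hasDerivAt_dirichletSeries_add hlam hx hs hr 1 0).isBigO_sub.mono
    (nhdsWithin_le_nhds (s := {w : ℂ | 0 < w.re}))
  simpa [h0] using h

theorem summable_mul_exp_neg_mul (hlam : ∀ i, 0 ≤ lam i)
    (hs : Summable fun i => Real.exp (-r * lam i)) (hr : r < ρ) :
    Summable fun i => lam i * Real.exp (-ρ * lam i) := by
  have hle (i : ι) : |lam i| ≤ 1 * lam i := by rw [one_mul, abs_of_nonneg (hlam i)]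
  refine (summable_norm_dirichletTerm hlam hle hs 1 le_rfl (s := ρ) (by simpa using hr)).congr
    fun i => ?_
  simp [norm_dirichletTerm _ _ _ (hlam i), abs_of_nonneg (hlam i)]

theorem tsum_mul_exp_neg_mul_pos [Nonempty ι] (hlam : ∀ i, 0 < lam i)
    (hs : Summable fun i => Real.exp (-r * lam i)) (hr : r < ρ) :
    0 < ∑' i, lam i * Real.exp (-ρ * lam i) := by
  have hpos (i : ι) : 0 < lam i * Real.exp (-ρ * lam i) := mul_pos (hlam i) (Real.exp_pos _)
  exact (summable_mul_exp_neg_mul (fun i => (hlam i).le) hs hr).tsum_pos (fun i => (hpos i).le)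
    (Classical.arbitrary ι) (hpos _)

theorem isTheta_one_sub_dirichletSeries [Nonempty ι] (hlam : ∀ i, 0 < lam i)
    (hx : ∀ i, |x i| ≤ B * lam i) (hs : Summable fun i => Real.exp (-r * lam i)) (hr : r < ρ)
    (h1 : HasSum (fun i => Real.exp (-ρ * lam i)) 1) :
    (fun w : ℂ => 1 - dirichletSeries x lam 0 0 (ρ + w)) =Θ[rightHalfPlaneNhds] fun w => w := by
  have hρ : dirichletSeries x lam 0 0 ρ = 1 := by
    simp only [dirichletSeries_ofReal, pow_zero, Real.rpow_zero, one_mul, h1.tsum_eq,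
      Complex.ofReal_one]
  have hderiv : -dirichletSeries x lam 0 ((0 : ℕ) + 1) ρ ≠ 0 := by
    simp only [dirichletSeries_ofReal, Nat.cast_zero, zero_add, pow_zero, Real.rpow_one, one_mul]
    exact neg_ne_zero.2 (Complex.ofReal_ne_zero.2 (tsum_mul_exp_neg_mul_pos hlam hs hr).ne')
  have hd := (hasDerivAt_dirichletSeries_add (fun i => (hlam i).le) hx hs hr 0 0).const_sub 1
  have hpair : Tendsto (fun w : ℂ => (w, (0 : ℂ))) (nhds 0) (nhds 0 ×ˢ pure 0) :=
    tendsto_id.prodMk tendsto_const_pure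
  have hrev := (HasDerivAtFilter.isTheta_sub hd (neg_ne_zero.2 hderiv)).2.comp_tendsto hpair
  have htheta : (fun w : ℂ => 1 - dirichletSeries x lam 0 0 (ρ + w)) =Θ[nhds 0] fun w => w :=
    ⟨by simpa [hρ] using hd.isBigO_sub, by simpa [Function.comp_def, hρ] using hrev⟩
  exact htheta.mono nhdsWithin_le_nhds

end RenewalRecurrence

/-- The hypotheses of the renewal argument for letters of length `lam i` carrying the mark `x i`:
the weights `exp (-ρ * lam i)` form a probability law with exponentially small tails, under which
the marks, dominated by the lengths, have mean `0`. -/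
structure CentredLetters {ι : Type*} (x lam : ι → ℝ) (B r ρ : ℝ) : Prop where
  length_pos : ∀ i, 0 < lam i
  abs_mark_le : ∀ i, |x i| ≤ B * lam i
  lt : r < ρ
  summable_exp : Summable fun i => Real.exp (-r * lam i)
  hasSum_one : HasSum (fun i => Real.exp (-ρ * lam i)) 1
  hasSum_mark : HasSum (fun i => x i * Real.exp (-ρ * lam i)) 0

namespace CentredLetters

variable {ι : Type*} {x lam : ι → ℝ} {B r ρ : ℝ}

theorem length_nonneg (h : CentredLetters x lam B r ρ) (i : ι) : 0 ≤ lam i :=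
  (h.length_pos i).le

theorem nonempty (h : CentredLetters x lam B r ρ) : Nonempty ι :=
  not_isEmpty_iff.1 fun _ => by simpa using h.hasSum_one.tsum_eq

theorem summable_norm_word (h : CentredLetters x lam B r ρ) (k : ℕ) {β : ℝ} (hβ : 0 ≤ β) {s : ℂ}
    (hs : ρ < s.re) :
    Summable fun l => ‖dirichletTerm (wordSum x) (wordSum lam) k β s l‖ := by
  obtain ⟨σ, hρσ, hσs⟩ := exists_between hs
  exact summable_norm_dirichletTerm (wordSum_nonneg h.length_nonneg)
    (abs_wordSum_le h.abs_mark_le)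
    (summable_exp_neg_mul_wordSum h.length_pos h.hasSum_one hρσ) k hβ hσs

/- Only for `(a, b) = (1, 0)` and `k` odd is the bound on the word series a power of `w⁻¹` too
large; there the vanishing of the mean mark gains a factor `w`. -/
theorem isBigO_letter_mul_word (h : CentredLetters x lam B r ρ) {k j a b : ℕ} (ha : a ≤ k)
    (hb : b ≤ j) (hab : (a, b) ≠ (0, 0))
    (hword : (fun w : ℂ => dirichletSeries (wordSum x) (wordSum lam) (k - a) (j - b : ℕ) (ρ + w))
      =O[rightHalfPlaneNhds] fun w => w⁻¹ ^ ((k - a) / 2 + (j - b) + 1)) :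
    (fun w : ℂ => dirichletSeries x lam a b (ρ + w) *
      dirichletSeries (wordSum x) (wordSum lam) (k - a) (j - b : ℕ) (ρ + w))
      =O[rightHalfPlaneNhds] fun w => w⁻¹ ^ (k / 2 + j) := by
  by_cases h10 : (a, b) = (1, 0)
  · obtain ⟨rfl, rfl⟩ := Prod.mk.inj h10
    have hletter := isBigO_dirichletSeries_id h.length_nonneg h.abs_mark_le h.summable_exp h.lt
      h.hasSum_mark
    have hcancel : (fun w : ℂ => w * w⁻¹ ^ ((k - 1) / 2 + (j - 0) + 1))
        =ᶠ[rightHalfPlaneNhds] fun w => w⁻¹ ^ ((k - 1) / 2 + j) := by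
      filter_upwards [rightHalfPlaneNhds_le_nhdsNE self_mem_nhdsWithin] with w hw
      rw [pow_succ', mul_inv_cancel_left₀ hw, Nat.sub_zero]
    have hprod := (hletter.mul hword).trans_eventuallyEq hcancel
    simpa using hprod.trans (isBigO_inv_pow_inv_pow (by lia))
  · have hletter := isBigO_dirichletSeries_one h.length_nonneg h.abs_mark_le h.summable_exp h.lt a b
    have hprod := hletter.mul hword
    simp only [one_mul] at hprod
    exact hprod.trans (isBigO_inv_pow_inv_pow (by grind))

theorem isBigO_word_of_one_sub_mul (h : CentredLetters x lam B r ρ) {f : ℂ → ℂ} {n : ℕ}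
    (hf : (fun w : ℂ => (1 - dirichletSeries x lam 0 0 (ρ + w)) * f w)
      =O[rightHalfPlaneNhds] fun w => w⁻¹ ^ n) :
    f =O[rightHalfPlaneNhds] fun w => w⁻¹ ^ (n + 1) := by
  have := h.nonempty
  have htheta := isTheta_one_sub_dirichletSeries h.length_pos h.abs_mark_le h.summable_exp h.lt
    h.hasSum_one
  have hcancel : (fun w : ℂ => (1 - dirichletSeries x lam 0 0 (ρ + w))⁻¹ *
      ((1 - dirichletSeries x lam 0 0 (ρ + w)) * f w)) =ᶠ[rightHalfPlaneNhds] f := by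
    filter_upwards [htheta.eq_zero_iff, rightHalfPlaneNhds_le_nhdsNE self_mem_nhdsWithin]
      with w hw hw0
    rw [inv_mul_cancel_left₀ (mt hw.1 hw0)]
  simpa only [pow_succ'] using hcancel.symm.trans_isBigO (htheta.inv.1.mul hf)

theorem isBigO_word (h : CentredLetters x lam B r ρ) (k j : ℕ) :
    (fun w : ℂ => dirichletSeries (wordSum x) (wordSum lam) k j (ρ + w))
      =O[rightHalfPlaneNhds] fun w => w⁻¹ ^ (k / 2 + j + 1) := by
  induction hn : k + j using Nat.strong_induction_on generalizing k j with
  | _ n ih =>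
  refine h.isBigO_word_of_one_sub_mul ?_
  have hnil : (fun w : ℂ => dirichletTerm (wordSum x) (wordSum lam) k j (ρ + w) [])
      =O[rightHalfPlaneNhds] fun w => w⁻¹ ^ (k / 2 + j) := by
    simp only [dirichletTerm, wordSum_nil, Complex.ofReal_zero, mul_zero, Complex.exp_zero]
    exact (isBigO_const_const _ one_ne_zero _).trans (isBigO_inv_pow_inv_pow (Nat.zero_le _))
  have hsum := IsBigO.fun_sum (l := rightHalfPlaneNhds) (g := fun w : ℂ => w⁻¹ ^ (k / 2 + j))
    (s := (Finset.range (k + 1) ×ˢ Finset.range (j + 1)).erase (0, 0))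
    fun p hp => by
      obtain ⟨hp0, hp⟩ := Finset.mem_erase.1 hp
      obtain ⟨ha, hb⟩ := Finset.mem_product.1 hp
      rw [Finset.mem_range_succ_iff] at ha hb
      exact (h.isBigO_letter_mul_word ha hb hp0 (ih _ (by grind) _ _ rfl)).const_mul_left
        (k.choose p.1 * j.choose p.2 : ℂ)
  refine (hnil.add hsum).congr' ?_ .rfl
  filter_upwards [self_mem_nhdsWithin] with w (hw : 0 < w.re)
  have hre : ρ < (ρ + w).re := by simpa using hw
  exact (one_sub_mul_dirichletSeries_wordSum
    (fun a b => summable_norm_dirichletTerm h.length_nonneg h.abs_mark_le h.summable_exp a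
      b.cast_nonneg (h.lt.trans hre))
    fun a b => h.summable_norm_word a b.cast_nonneg hre).symm

end CentredLetters

section MellinTransfer

open MeasureTheory

variable {α p c : ℝ}

theorem integrableOn_rpow_mul_max_rpow {a : ℝ} (ha : 0 < a) (hα : 0 < α) (hp : α < p) :
    IntegrableOn (fun t : ℝ => t ^ (α - 1) * max a t ^ (-p)) (Set.Ioi 0) := by
  have hcont : Continuous fun t : ℝ => max a t ^ (-p) :=
    (continuous_const.max continuous_id).rpow_const fun t => .inl (lt_max_of_lt_left ha).ne'
  refine mellin_convergent_of_isBigO_scalar (a := p) (b := 0)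
    (hcont.locallyIntegrable.locallyIntegrableOn _) ?_ hp ?_ hα
  · refine EventuallyEq.isBigO ?_
    filter_upwards [eventually_ge_atTop a] with t ht
    rw [max_eq_right ht]
  · simpa using (hcont.tendsto 0).isBigO_one ℝ |>.mono nhdsWithin_le_nhds

theorem integral_rpow_mul_max_rpow {a : ℝ} (ha : 0 < a) :
    ∫ t in Set.Ioi (0 : ℝ), t ^ (α - 1) * max a t ^ (-p) =
      (∫ t in Set.Ioi (0 : ℝ), t ^ (α - 1) * max 1 t ^ (-p)) * a ^ (α - p) := by
  have hscale := integral_comp_mul_left_Ioi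
    (fun t : ℝ => t ^ (α - 1) * max a t ^ (-p)) 0 ha
  rw [mul_zero, smul_eq_mul, eq_inv_mul_iff_mul_eq₀ ha.ne'] at hscale
  rw [← hscale, ← integral_const_mul, ← integral_mul_const]
  refine setIntegral_congr_fun measurableSet_Ioi fun t (ht : 0 < t) => ?_
  have hmax : max a (a * t) = a * max 1 t := by rw [mul_max_of_nonneg _ _ ha.le, mul_one]
  have hapow : a ^ (α - p) = a * (a ^ (α - 1) * a ^ (-p)) := by
    rw [← Real.rpow_add ha, mul_comm, ← Real.rpow_add_one ha.ne']
    ring_nf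
  simp only [hmax]
  rw [Real.mul_rpow ha.le ht.le, Real.mul_rpow ha.le (by positivity), hapow]
  ring

theorem max_norm_le_norm_add_ofReal {w : ℂ} (hw : 0 ≤ w.re) {t : ℝ} (ht : 0 ≤ t) :
    max ‖w‖ t ≤ ‖w + t‖ := by
  refine max_le ?_ (by simpa using (le_add_of_nonneg_left hw).trans (Complex.re_le_norm (w + t)))
  rw [Complex.norm_def, Complex.norm_def, Complex.normSq_apply, Complex.normSq_apply]
  refine Real.sqrt_le_sqrt ?_
  simp only [Complex.add_re, Complex.add_im, Complex.ofReal_re, Complex.ofReal_im, add_zero]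
  nlinarith

theorem exp_neg_mul_sub_le_mul_rpow_neg (hc : 0 < c) (hp : 0 ≤ p) (σ : ℝ) {t u : ℝ} (ht : 0 < t)
    (htu : t ≤ u) :
    Real.exp (-c * (u - σ)) ≤ Real.exp (c * σ) * (p / c) ^ p * t ^ (-p) := by
  have hpow : t ^ p ≤ (p / c) ^ p * Real.exp (c * t) := by
    simpa only [abs_of_pos hc, abs_of_pos ht] using
      ProbabilityTheory.rpow_abs_le_mul_exp_abs t hp hc.ne'
  have hexp : Real.exp (-c * (u - σ)) * Real.exp (c * t) ≤ Real.exp (c * σ) := by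
    rw [← Real.exp_add]
    gcongr
    nlinarith
  rw [Real.rpow_neg ht.le, ← div_eq_mul_inv, le_div_iff₀ (by positivity)]
  calc Real.exp (-c * (u - σ)) * t ^ p
      ≤ Real.exp (-c * (u - σ)) * ((p / c) ^ p * Real.exp (c * t)) := by gcongr
    _ = Real.exp (-c * (u - σ)) * Real.exp (c * t) * (p / c) ^ p := by ring
    _ ≤ Real.exp (c * σ) * (p / c) ^ p := by gcongr

theorem exists_norm_le_mul_max_rpow {F : ℂ → ℂ} (hc : 0 < c) (hp : 0 ≤ p)
    (hnear : F =O[rightHalfPlaneNhds] fun w => ‖w‖ ^ (-p))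
    (hfar : ∀ σ > 0, ∃ S, ∀ s : ℂ, σ ≤ s.re → ‖F s‖ ≤ S * Real.exp (-c * (s.re - σ))) :
    ∃ C, ∀ᶠ w in rightHalfPlaneNhds, ∀ t : ℝ, 0 < t → ‖F (w + t)‖ ≤ C * max ‖w‖ t ^ (-p) := by
  obtain ⟨C₁, δ, hC₁, hδ, hbound⟩ := exists_forall_norm_le_of_isBigO hnear
  obtain ⟨S, hS⟩ := hfar (δ / 2) (half_pos hδ)
  refine ⟨max C₁ (S * (Real.exp (c * (δ / 2)) * (p / c) ^ p)), ?_⟩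
  filter_upwards [self_mem_nhdsWithin,
    nhdsWithin_le_nhds (Metric.ball_mem_nhds (0 : ℂ) (half_pos hδ))] with w (hw : 0 < w.re) hwδ t ht
  rw [mem_ball_zero_iff] at hwδ
  have hmax : 0 < max ‖w‖ t := lt_max_of_lt_right ht
  rcases lt_or_ge t (δ / 2) with htδ | htδ
  · have hre : 0 < (w + t).re := by simpa using add_pos hw ht
    have hlt : ‖w + t‖ < δ := by
      have := norm_add_le w t
      rw [Complex.norm_real, Real.norm_of_nonneg ht.le] at this
      linarith
    calc ‖F (w + t)‖ ≤ C₁ * ‖w + t‖ ^ (-p) := hbound _ hre hlt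
      _ ≤ C₁ * max ‖w‖ t ^ (-p) := by
        gcongr ?_ * ?_
        exact Real.rpow_le_rpow_of_nonpos hmax (max_norm_le_norm_add_ofReal hw.le ht.le) (by simpa)
      _ ≤ _ := by gcongr; exact le_max_left _ _
  · have htre : t ≤ (w + t).re := by simpa using hw.le
    have hF := hS (w + t) (htδ.trans htre)
    have hS0 : 0 ≤ S := nonneg_of_mul_nonneg_left ((norm_nonneg _).trans hF) (Real.exp_pos _)
    rw [max_eq_right (hwδ.le.trans htδ)]
    calc ‖F (w + t)‖ ≤ S * Real.exp (-c * ((w + t).re - δ / 2)) := hF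
      _ ≤ S * (Real.exp (c * (δ / 2)) * (p / c) ^ p * t ^ (-p)) := by
        gcongr
        exact exp_neg_mul_sub_le_mul_rpow_neg hc hp _ ht htre
      _ ≤ _ := by rw [← mul_assoc]; gcongr; exact le_max_right _ _

theorem isBigO_mellin_add {F : ℂ → ℂ} (hc : 0 < c) (hα : 0 < α) (hp : α < p)
    (hnear : F =O[rightHalfPlaneNhds] fun w => ‖w‖ ^ (-p))
    (hfar : ∀ σ > 0, ∃ S, ∀ s : ℂ, σ ≤ s.re → ‖F s‖ ≤ S * Real.exp (-c * (s.re - σ))) :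
    (fun w => mellin (fun t => F (w + t)) α) =O[rightHalfPlaneNhds] fun w => ‖w‖ ^ (α - p) := by
  obtain ⟨C, hC⟩ := exists_norm_le_mul_max_rpow hc (hα.trans hp).le hnear hfar
  refine .of_bound (C * ∫ t in Set.Ioi (0 : ℝ), t ^ (α - 1) * max 1 t ^ (-p)) ?_
  filter_upwards [hC, rightHalfPlaneNhds_le_nhdsNE self_mem_nhdsWithin] with w hCw hw0
  have hw : 0 < ‖w‖ := norm_pos_iff.2 hw0
  rw [Real.norm_of_nonneg (by positivity), mul_assoc, ← integral_rpow_mul_max_rpow hw,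
    ← integral_const_mul]
  refine norm_integral_le_of_norm_le ((integrableOn_rpow_mul_max_rpow hw hα hp).const_mul C) ?_
  refine (ae_restrict_iff' measurableSet_Ioi).2 (.of_forall fun t (ht : 0 < t) => ?_)
  have hnorm : ‖(t : ℂ) ^ ((α : ℂ) - 1)‖ = t ^ (α - 1) := by
    rw [Complex.norm_cpow_eq_rpow_re_of_pos ht]; simp
  rw [norm_smul, hnorm, mul_left_comm]
  exact mul_le_mul_of_nonneg_left (hCw t ht) (by positivity)

end MellinTransfer

section HalfPowers

variable {α : Type*} {x y : α → ℝ} {c ρ β : ℝ} {k : ℕ}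

theorem dirichletTerm_add_ofReal (s : ℂ) (t : ℝ) (a : α) :
    dirichletTerm x y k β (s + t) a = dirichletTerm x y k β s a * (Real.exp (-y a * t) : ℝ) := by
  rw [dirichletTerm, dirichletTerm, mul_assoc _ (Complex.exp _), Complex.ofReal_exp,
    ← Complex.exp_add]
  push_cast
  ring_nf

theorem dirichletTerm_sub {γ : ℝ} (hγ : 0 < γ) (hγβ : γ < β) (s : ℂ) {a : α} (hy : 0 ≤ y a) :
    dirichletTerm x y k (β - γ) s a = dirichletTerm x y k β s a / (y a : ℂ) ^ (γ : ℂ) := by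
  have hpow : y a ^ (β - γ) = y a ^ β / y a ^ γ := by
    rcases hy.eq_or_lt with h0 | hpos
    · rw [← h0, Real.zero_rpow (sub_pos.2 hγβ).ne', Real.zero_rpow (hγ.trans hγβ).ne', zero_div]
    · exact Real.rpow_sub hpos _ _
  rw [dirichletTerm, dirichletTerm, hpow, ← Complex.ofReal_cpow hy]
  push_cast
  ring

theorem gamma_mul_dirichletSeries_sub [Countable α] {γ : ℝ} {s : ℂ} (hγ : 0 < γ) (hγβ : γ < β)
    (hy : ∀ a, 0 ≤ y a)
    (hs : ∀ t : ℝ, 0 < t → Summable fun a => ‖dirichletTerm x y k β (s + t) a‖)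
    (hs' : Summable fun a => ‖dirichletTerm x y k (β - γ) s a‖) :
    Complex.Gamma γ * dirichletSeries x y k (β - γ) s =
      mellin (fun t => dirichletSeries x y k β (s + t)) γ := by
  have hzero (a : α) : dirichletTerm x y k β s a = 0 ∨ 0 < y a := by
    refine (hy a).eq_or_lt.imp (fun h0 => ?_) id
    simp [dirichletTerm, ← h0, Real.zero_rpow (hγ.trans hγβ).ne']
  have hlaplace (t : ℝ) (ht : 0 < t) :
      HasSum (fun a => dirichletTerm x y k β s a * (Real.exp (-y a * t) : ℝ))
        (dirichletSeries x y k β (s + t)) := by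
    simp_rw [← dirichletTerm_add_ofReal]
    exact (hs t ht).of_norm.hasSum
  have hdiv : Summable fun a => ‖dirichletTerm x y k β s a‖ / y a ^ (γ : ℂ).re :=
    hs'.congr fun a => by
      rw [dirichletTerm_sub hγ hγβ s (hy a), norm_div, ← Complex.ofReal_cpow (hy a),
        Complex.norm_real, Real.norm_of_nonneg (Real.rpow_nonneg (hy a) _), Complex.ofReal_re]
  rw [← (hasSum_mellin hzero (by simpa using hγ) hlaplace hdiv).tsum_eq, dirichletSeries,
    ← tsum_mul_left]
  exact tsum_congr fun a => by rw [dirichletTerm_sub hγ hγβ s (hy a), mul_div_assoc]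

theorem isBigO_dirichletSeries_sub [Countable α] {γ p : ℝ} (hc : 0 < c) (hγ : 0 < γ)
    (hγβ : γ < β) (hγp : γ < p) (hgap : ∀ a, y a = 0 ∨ c ≤ y a)
    (hs : ∀ b : ℝ, 0 ≤ b → ∀ s : ℂ, ρ < s.re → Summable fun a => ‖dirichletTerm x y k b s a‖)
    (h : (fun w : ℂ => dirichletSeries x y k β (ρ + w))
      =O[rightHalfPlaneNhds] fun w => ‖w‖ ^ (-p)) :
    (fun w : ℂ => dirichletSeries x y k (β - γ) (ρ + w))
      =O[rightHalfPlaneNhds] fun w => ‖w‖ ^ (γ - p) := by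
  have hy (a : α) : 0 ≤ y a := (hgap a).elim Eq.ge hc.le.trans
  have hβ : 0 < β := hγ.trans hγβ
  have hfar (σ : ℝ) (hσ : 0 < σ) : ∃ S, ∀ w : ℂ, σ ≤ w.re →
      ‖dirichletSeries x y k β (ρ + w)‖ ≤ S * Real.exp (-c * (w.re - σ)) := by
    obtain ⟨S, hS⟩ := exists_norm_dirichletSeries_le_mul_exp (σ := ρ + σ) hy hgap hβ.ne'
      (hs β hβ.le (ρ + σ : ℝ) (by simpa using hσ))
    exact ⟨S, fun w hw => by simpa using hS (ρ + w) (by simpa using hw)⟩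
  have hΓ : Complex.Gamma γ ≠ 0 := Complex.Gamma_ne_zero_of_re_pos (by simpa using hγ)
  refine ((isBigO_mellin_add hc hγ hγp h hfar).const_mul_left (Complex.Gamma γ)⁻¹).congr' ?_ .rfl
  filter_upwards [self_mem_nhdsWithin] with w (hw : 0 < w.re)
  simp_rw [← add_assoc]
  rw [← gamma_mul_dirichletSeries_sub hγ hγβ hy
    (fun t ht => hs β hβ.le _ (by simpa [add_assoc] using add_pos hw ht))
    (hs (β - γ) (sub_pos.2 hγβ).le _ (by simpa using hw)), inv_mul_cancel_left₀ hΓ]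

end HalfPowers

theorem CentredLetters.isBigO_word_rpow {ι : Type*} [Countable ι] {x lam : ι → ℝ}
    {B r ρ c β : ℝ} (h : CentredLetters x lam B r ρ) (hc : 0 < c) (hlam : ∀ i, c ≤ lam i) (k : ℕ)
    (hβ : 0 < β) :
    (fun w : ℂ => dirichletSeries (wordSum x) (wordSum lam) k β (ρ + w))
      =O[rightHalfPlaneNhds] fun w => ‖w‖ ^ (-((k / 2 : ℕ) + β + 1)) := by
  set j := ⌊β⌋₊ + 1
  have hβj : β < j := by simpa [j] using Nat.lt_floor_add_one β
  have hword : (fun w : ℂ => dirichletSeries (wordSum x) (wordSum lam) k j (ρ + w))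
      =O[rightHalfPlaneNhds] fun w => ‖w‖ ^ (-((k / 2 : ℕ) + j + 1 : ℝ)) := by
    refine (h.isBigO_word k j).norm_right.congr_right fun w => ?_
    rw [Real.rpow_neg (norm_nonneg w), norm_pow, norm_inv, inv_pow]
    exact_mod_cast rfl
  have hshift := isBigO_dirichletSeries_sub hc (sub_pos.2 hβj) (sub_lt_self _ hβ)
    (by linarith [(k / 2).cast_nonneg (α := ℝ)]) (wordSum_eq_zero_or_le hc.le hlam)
    (fun b hb s hs => h.summable_norm_word k hb hs) hword
  convert! hshift using 3 <;> ring

/-- The list of factors of an ordered factorisation, identifying the ordered factorisations of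
all natural numbers into elements of `P` with the words over the alphabet `P`. -/
def factorizationEquiv (P : Set ℕ) :
    (Σ n : ℕ, Σ m : ℕ, {t : Fin m → ℕ // (∀ i, t i ∈ P) ∧ ∏ i, t i = n}) ≃ List P :=
  let tuples : (Σ n : ℕ, Σ m : ℕ, {t : Fin m → ℕ // (∀ i, t i ∈ P) ∧ ∏ i, t i = n}) ≃
      Σ m, Fin m → P :=
    { toFun f := ⟨f.2.1, fun i => ⟨f.2.2.1 i, f.2.2.2.1 i⟩⟩
      invFun v := ⟨∏ i, (v.2 i : ℕ), v.1, fun i => v.2 i, fun i => (v.2 i).2, rfl⟩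
      left_inv := by rintro ⟨n, m, t, ht, rfl⟩; rfl
      right_inv _ := rfl }
  tuples.trans List.equivSigmaTuple.symm

/-- The length `log n` of a letter `n ∈ P`, which makes the length of a word the logarithm of the
product of its letters. -/
def letterLength (P : Set ℕ) (n : P) : ℝ := Real.log (n : ℕ)

/-- The mark `1 - μ log n` of a letter `n ∈ P`, the contribution of one factor to
`m - μ log (n₁ ⋯ n_m)`. -/
def letterMark (P : Set ℕ) (μ : ℝ) (n : P) : ℝ := 1 - μ * letterLength P n

section Factorizations

variable {P : Set ℕ} {μ : ℝ} {k : ℕ} {s : ℂ}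

theorem wordSum_letterMark (l : List P) :
    wordSum (letterMark P μ) l = l.length - μ * wordSum (letterLength P) l := by
  induction l with
  | nil => simp
  | cons n l ih => simp only [wordSum_cons, ih, letterMark, List.length_cons]; push_cast; ring

theorem wordSum_letterLength_factorizationEquiv (hP : 0 ∉ P) {n m : ℕ}
    (t : {t : Fin m → ℕ // (∀ i, t i ∈ P) ∧ ∏ i, t i = n}) :
    wordSum (letterLength P) (factorizationEquiv P ⟨n, m, t⟩) = Real.log n := by
  obtain ⟨t, ht, rfl⟩ := t
  have hne (i : Fin m) : (t i : ℝ) ≠ 0 := Nat.cast_ne_zero.2 (ne_of_mem_of_not_mem (ht i) hP)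
  rw [Nat.cast_prod, Real.log_prod fun i _ => hne i]
  simp [wordSum, factorizationEquiv, List.equivSigmaTuple, letterLength, List.map_ofFn,
    List.sum_ofFn]

theorem dirichletTerm_factorizationEquiv (hP : 0 ∉ P) {n m : ℕ}
    (t : {t : Fin m → ℕ // (∀ i, t i ∈ P) ∧ ∏ i, t i = n}) (β : ℝ) :
    dirichletTerm (wordSum (letterMark P μ)) (wordSum (letterLength P)) k β s
        (factorizationEquiv P ⟨n, m, t⟩) =
      (((m - μ * Real.log n) ^ k * Real.log n ^ β : ℝ) : ℂ) * (n : ℂ) ^ (-s) := by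
  have hn : (n : ℂ) ≠ 0 := by
    obtain ⟨t, ht, rfl⟩ := t
    exact Nat.cast_ne_zero.2
      (Finset.prod_ne_zero_iff.2 fun i _ => ne_of_mem_of_not_mem (ht i) hP)
  have hlength : (factorizationEquiv P ⟨n, m, t⟩).length = m :=
    List.length_ofFn
  rw [dirichletTerm, wordSum_letterMark, wordSum_letterLength_factorizationEquiv hP, hlength,
    Complex.cpow_def_of_ne_zero hn, ← Complex.natCast_log, mul_comm (-s)]
  push_cast
  ring

theorem tsum_dirichletTerm_factorizationEquiv (hP : 0 ∉ P) {β : ℝ} (n : ℕ)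
    (hs : Summable fun l =>
      dirichletTerm (wordSum (letterMark P μ)) (wordSum (letterLength P)) k β s l) :
    ∑' f, dirichletTerm (wordSum (letterMark P μ)) (wordSum (letterLength P)) k β s
        (factorizationEquiv P ⟨n, f⟩) =
      ((bCoef P μ k n * Real.log n ^ β : ℝ) : ℂ) * (n : ℂ) ^ (-s) := by
  have hfibre : Summable fun f => dirichletTerm (wordSum (letterMark P μ))
      (wordSum (letterLength P)) k β s (factorizationEquiv P ⟨n, f⟩) :=
    (hs.comp_injective (factorizationEquiv P).injective).comp_injective sigma_mk_injective
  rw [hfibre.tsum_sigma]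
  simp_rw [dirichletTerm_factorizationEquiv hP, tsum_const]
  rw [bCoef, Complex.ofReal_mul, Complex.ofReal_tsum, mul_assoc, ← tsum_mul_right]
  refine tsum_congr fun m => ?_
  rw [nsmul_eq_mul, af]
  push_cast
  ring

theorem summable_norm_D3_term (hP : 0 ∉ P)
    (hs : Summable fun l => ‖dirichletTerm (wordSum (letterMark P μ)) (wordSum (letterLength P))
      k (k / 2) s l‖) :
    Summable fun n : ℕ =>
      ‖((bCoef P μ k n * Real.log n ^ ((k : ℝ) / 2) : ℝ) : ℂ) * (n : ℂ) ^ (-s)‖ := by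
  have hs' := hs.comp_injective (factorizationEquiv P).injective
  refine hs'.sigma.of_nonneg_of_le (fun _ => norm_nonneg _) fun n => ?_
  rw [← tsum_dirichletTerm_factorizationEquiv hP n hs.of_norm]
  exact norm_tsum_le_tsum_norm (hs'.comp_injective sigma_mk_injective)

theorem D3_eq_dirichletSeries (hP : 0 ∉ P)
    (hs : Summable fun l => ‖dirichletTerm (wordSum (letterMark P μ)) (wordSum (letterLength P))
      k (k / 2) s l‖) :
    D3 P μ k s =
      dirichletSeries (wordSum (letterMark P μ)) (wordSum (letterLength P)) k (k / 2) s := by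
  have hs' : Summable fun f => dirichletTerm (wordSum (letterMark P μ))
      (wordSum (letterLength P)) k (k / 2) s (factorizationEquiv P f) :=
    hs.of_norm.comp_injective (factorizationEquiv P).injective
  rw [dirichletSeries, ← (factorizationEquiv P).tsum_eq, hs'.tsum_sigma, D3]
  exact tsum_congr fun n => (tsum_dirichletTerm_factorizationEquiv hP n hs.of_norm).symm

end Factorizations

section CriticalExponent

variable {P : Set ℕ} {μ ρ : ℝ} {k : ℕ}

theorem log_two_le_letterLength (hP : ∀ n ∈ P, 2 ≤ n) (n : P) : Real.log 2 ≤ letterLength P n :=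
  Real.log_le_log two_pos (by exact_mod_cast hP n n.2)

theorem rpow_neg_eq_exp_letterLength (hP : 0 ∉ P) (x : ℝ) (n : P) :
    ((n : ℕ) : ℝ) ^ (-x) = Real.exp (-x * letterLength P n) := by
  have hn : 0 < (n : ℕ) := Nat.pos_of_ne_zero (ne_of_mem_of_not_mem n.2 hP)
  rw [Real.rpow_def_of_pos (by exact_mod_cast hn), mul_comm, letterLength]

theorem abs_letterMark_le (hP : ∀ n ∈ P, 2 ≤ n) (n : P) :
    |letterMark P μ n| ≤ ((Real.log 2)⁻¹ + |μ|) * letterLength P n := by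
  have hlog : 0 < Real.log 2 := Real.log_pos one_lt_two
  have hlen := log_two_le_letterLength hP n
  have hone : 1 ≤ (Real.log 2)⁻¹ * letterLength P n := by
    rwa [← div_eq_inv_mul, one_le_div hlog]
  calc |letterMark P μ n| ≤ |1| + |μ * letterLength P n| := abs_sub _ _
    _ = 1 + |μ| * letterLength P n := by
      rw [abs_one, abs_mul, abs_of_nonneg (hlog.le.trans hlen)]
    _ ≤ _ := by linarith

theorem exists_centredLetters (hP : ∀ n ∈ P, 2 ≤ n) (hρκ : kappa P < (ρ : EReal))
    (hρ1 : Pval P ρ = 1) (hμ : μ = -1 / Pderiv1 P ρ) :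
    ∃ B r, CentredLetters (letterMark P μ) (letterLength P) B r ρ := by
  have h0 : 0 ∉ P := fun h => absurd (hP 0 h) (by simp)
  have hlen (n : P) : 0 < letterLength P n :=
    (Real.log_pos one_lt_two).trans_le (log_two_le_letterLength hP n)
  obtain ⟨-, ⟨r, rfl, hs⟩, hr⟩ := sInf_lt_iff.1 hρκ
  rw [EReal.coe_lt_coe_iff] at hr
  simp only [Pval, Pderiv1, rpow_neg_eq_exp_letterLength h0] at hs hρ1 hμ
  have : Nonempty P := not_isEmpty_iff.1 fun _ => by simp at hρ1
  have hone : HasSum (fun n => Real.exp (-ρ * letterLength P n)) 1 := by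
    rw [← hρ1]
    refine (hs.of_nonneg_of_le (fun _ => (Real.exp_pos _).le) fun n => ?_).hasSum
    exact Real.exp_le_exp.2 (by nlinarith [hlen n])
  have hmean := (summable_mul_exp_neg_mul (fun n => (hlen n).le) hs hr).hasSum
  have hμ1 : μ * ∑' n, letterLength P n * Real.exp (-ρ * letterLength P n) = 1 := by
    have := (tsum_mul_exp_neg_mul_pos hlen hs hr).ne'
    simp_rw [hμ, ← letterLength.eq_1, mul_comm (Real.exp _), neg_div_neg_eq]
    exact one_div_mul_cancel this
  have hmark := hone.sub (hmean.mul_left μ)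
  rw [hμ1, sub_self] at hmark
  exact ⟨_, r, hlen, abs_letterMark_le hP, hr, hs, hone,
    hmark.congr_fun fun n => by rw [letterMark]; ring⟩

theorem isBigO_D3 (hP : ∀ n ∈ P, 2 ≤ n) (hρκ : kappa P < (ρ : EReal)) (hρ1 : Pval P ρ = 1)
    (hμ : μ = -1 / Pderiv1 P ρ) (hk : 0 < k) :
    (fun w : ℂ => D3 P μ k (ρ + w))
      =O[rightHalfPlaneNhds] fun w => ‖w‖ ^ (-((k / 2 : ℕ) + k / 2 + 1) : ℝ) := by
  obtain ⟨B, r, h⟩ := exists_centredLetters hP hρκ hρ1 hμ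
  refine (h.isBigO_word_rpow (Real.log_pos one_lt_two) (log_two_le_letterLength hP) k
    (by positivity)).congr' ?_ .rfl
  filter_upwards [self_mem_nhdsWithin] with w (hw : 0 < w.re)
  exact (D3_eq_dirichletSeries (fun h0 => absurd (hP 0 h0) (by simp))
    (h.summable_norm_word k (by positivity) (by simpa using hw))).symm

end CriticalExponent

theorem D3_bound_general (P : Set ℕ) (hP : ∀ n ∈ P, 2 ≤ n) (ρ : ℝ)
    (hρκ : kappa P < (ρ : EReal)) (hρ1 : Pval P ρ = 1) (μ : ℝ) (hμ : μ = -1 / Pderiv1 P ρ)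
    (k : ℕ) (hk : Odd k) :
    (∀ s : ℂ, ρ < s.re →
      Summable (fun n : ℕ =>
        ‖((bCoef P μ k n * (Real.log n) ^ ((k : ℝ) / 2) : ℝ) : ℂ) * (n : ℂ) ^ (-s)‖)) ∧
    (∃ C δ : ℝ, 0 < C ∧ 0 < δ ∧ ∀ w : ℂ, 0 < w.re → ‖w‖ < δ →
      ‖D3 P μ k ((ρ : ℂ) + w)‖ ≤ C * ‖w‖ ^ (-(k : ℝ) - 1 / 2)) ∧
    ((fun w : ℂ => D3 P μ k ((ρ : ℂ) + w))
      =o[nhdsWithin 0 {w : ℂ | 0 < w.re}] fun w : ℂ => ‖w‖ ^ (-(k : ℝ) - 1)) := by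
  obtain ⟨B, r, h⟩ := exists_centredLetters hP hρκ hρ1 hμ
  have hexponent : -(((k / 2 : ℕ) : ℝ) + k / 2 + 1) = -k - 1 / 2 := by
    have : (k : ℝ) = 2 * (k / 2 : ℕ) + 1 := mod_cast (Nat.two_mul_div_two_add_one_of_odd hk).symm
    linarith
  have hO := isBigO_D3 hP hρκ hρ1 hμ hk.pos
  rw [hexponent] at hO
  exact ⟨fun s hs => summable_norm_D3_term (fun h0 => absurd (hP 0 h0) (by simp))
      (h.summable_norm_word k (by positivity) hs),
    exists_forall_norm_le_of_isBigO hO,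
    hO.trans_isLittleO (isLittleO_norm_rpow_norm_rpow (by linarith))⟩

/-- **Bound on the auxiliary Dirichlet series `D₃`.** Under the stated assumptions,
including non-periodicity, for every odd `k ≥ 1`: `D₃(s)` converges absolutely for
`Re s > ρ`, and for `w` with `Re w > 0` and `|w|` small,
`D₃(ρ + w) = O(|w|^{-k-1/2})`; in particular `D₃(ρ + w) = o(|w|^{-k-1})` as `w → 0`
within `Re w > 0`. -/
theorem D3_bound
    (P : Set ℕ) (hP : ∀ n ∈ P, 2 ≤ n) (hP2 : P.Nontrivial)
    (hκ : 1 < PvalE P (kappa P))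
    (ρ : ℝ) (hρ0 : 0 < ρ) (hρκ : kappa P < (ρ : EReal)) (hρ1 : Pval P ρ = 1)
    (μ : ℝ) (hμ : μ = -1 / Pderiv1 P ρ)
    (hnp : ∀ d : ℕ, 2 ≤ d → ¬ P ⊆ {n : ℕ | ∃ k : ℕ, 1 ≤ k ∧ n = d ^ k})
    (k : ℕ) (hk : Odd k) :
    (∀ s : ℂ, ρ < s.re →
      Summable (fun n : ℕ =>
        ‖((bCoef P μ k n * (Real.log n) ^ ((k : ℝ) / 2) : ℝ) : ℂ) * (n : ℂ) ^ (-s)‖)) ∧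
    (∃ C δ : ℝ, 0 < C ∧ 0 < δ ∧ ∀ w : ℂ, 0 < w.re → ‖w‖ < δ →
      ‖D3 P μ k ((ρ : ℂ) + w)‖ ≤ C * ‖w‖ ^ (-(k : ℝ) - 1 / 2)) ∧
    ((fun w : ℂ => D3 P μ k ((ρ : ℂ) + w))
      =o[nhdsWithin 0 {w : ℂ | 0 < w.re}] fun w : ℂ => ‖w‖ ^ (-(k : ℝ) - 1)) :=
  D3_bound_general P hP ρ hρκ hρ1 μ hμ k hk
end
end

section
/- Under the stated assumptions including non-periodicity, for every fixed integer k ≥ 0, (1/A(N)) Σ_{1≤n≤N} a(n) (log(N/n))^{k} = O(1) as N → ∞; that is, the k-th moment of log N − log ν_N is bounded, where ν_N is the random integer being factorized. -/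
open scoped BigOperators ENNReal
open Filter Asymptotics

noncomputable section

/-!
Prepending an element `r ∈ P` to an ordered factorization of an integer `n ≤ N / r` gives one of
`r n ≤ N`, and the first factor recovers `r`. Hence `Σ_{r ∈ Q} A(N / r) ≤ A(N)` for every finite
`Q ⊆ P`, and two elements `p < q` of `P` give `2 A(N / q) ≤ A(N)`. Geometric growth of `A` along
powers of `q` bounds `Σ a(n) (N / n)^ε` by a multiple of `A(N)` as soon as `q^ε < 2`, and
`(N / n)^ε` dominates every power of `log (N / n)`.
-/

lemma one_le_div_of_mem_Icc {N n : ℕ} (hn : n ∈ Finset.Icc 1 N) : (1 : ℝ) ≤ (N : ℝ) / n := by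
  obtain ⟨h1, hN⟩ := Finset.mem_Icc.1 hn
  rw [one_le_div (by exact_mod_cast h1)]
  exact_mod_cast hN

lemma log_pow_le_factorial_div_mul_rpow {y ε : ℝ} (hy : 1 ≤ y) (hε : 0 < ε) (k : ℕ) :
    Real.log y ^ k ≤ k.factorial / ε ^ k * y ^ ε := by
  have hexp : (Real.log y * ε) ^ k / k.factorial ≤ y ^ ε := by
    rw [Real.rpow_def_of_pos (by linarith)]
    exact Real.pow_div_factorial_le_exp _ (mul_nonneg (Real.log_nonneg hy) hε.le) k
  rw [mul_pow, div_le_iff₀ (by positivity)] at hexp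
  rw [div_mul_eq_mul_div, le_div_iff₀ (by positivity)]
  linarith

lemma exists_pos_rpow_lt {q c : ℝ} (hq : 1 < q) (hc : 1 < c) : ∃ ε : ℝ, 0 < ε ∧ q ^ ε < c := by
  obtain ⟨b, hb, hbc⟩ := exists_between hc
  refine ⟨Real.logb q b, Real.logb_pos hq hb, ?_⟩
  rwa [Real.rpow_logb (by positivity) hq.ne' (by positivity)]

lemma tsum_card_fiber {α β : Type*} [Finite α] (f : α → β) :
    ∑' b, (Nat.card {a // f a = b} : ℝ) = Nat.card α := by
  have : Finite (Σ b, {a // f a = b}) := Finite.of_equiv _ (Equiv.sigmaFiberEquiv f).symm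
  calc ∑' b, (Nat.card {a // f a = b} : ℝ)
      = ∑' b, ∑' _ : {a // f a = b}, (1 : ℝ) := by simp [tsum_const]
    _ = ∑' _ : Σ b, {a // f a = b}, (1 : ℝ) :=
        (Summable.tsum_sigma (f := fun _ => (1 : ℝ)) (Summable.of_finite)).symm
    _ = Nat.card α := by simp [tsum_const, Nat.card_congr (Equiv.sigmaFiberEquiv f)]

section Summatory

variable {a : ℕ → ℝ} {q : ℕ} {c ε : ℝ}

/-- The summatory function `N ↦ Σ_{1 ≤ n ≤ N} a(n)` of an arithmetic function, so that
`Acum P` is `summatory (aTot P)` by definition. -/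
def summatory (a : ℕ → ℝ) (N : ℕ) : ℝ := ∑ n ∈ Finset.Icc 1 N, a n

lemma summatory_nonneg (ha : ∀ n, 0 ≤ a n) (N : ℕ) : 0 ≤ summatory a N :=
  Finset.sum_nonneg fun n _ => ha n

lemma summatory_mono (ha : ∀ n, 0 ≤ a n) : Monotone (summatory a) := fun _ _ h =>
  Finset.sum_le_sum_of_subset_of_nonneg (Finset.Icc_subset_Icc_right h) fun n _ _ => ha n

lemma sum_mul_rpow_le_add_sum_div (hq : 0 < q) (ha : ∀ n, 0 ≤ a n) (hε : 0 ≤ ε) {x : ℝ}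
    (hx : 0 ≤ x) :
    ∑ n ∈ Finset.Icc 1 ⌊x⌋₊, a n * (x / n) ^ ε ≤
      (q : ℝ) ^ ε * (summatory a ⌊x⌋₊ + ∑ n ∈ Finset.Icc 1 ⌊x / q⌋₊, a n * (x / q / n) ^ ε) := by
  have hq0 : (0 : ℝ) < q := by exact_mod_cast hq
  have hsub : Finset.Icc 1 ⌊x / q⌋₊ ⊆ Finset.Icc 1 ⌊x⌋₊ := by
    rw [Nat.floor_div_natCast]
    exact Finset.Icc_subset_Icc_right (Nat.div_le_self _ _)
  have hscale : ∀ n : ℕ, (x / n) ^ ε = (q : ℝ) ^ ε * (x / q / n) ^ ε := fun n => by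
    rw [← Real.mul_rpow hq0.le (by positivity)]
    congr 1
    field_simp
  have htail : ∀ n ∈ Finset.Icc 1 ⌊x⌋₊ \ Finset.Icc 1 ⌊x / q⌋₊, (x / q / n) ^ ε ≤ 1 := by
    intro n hn
    simp only [Finset.mem_sdiff, Finset.mem_Icc, not_and, not_le] at hn
    have hlt : x / q < n := Nat.lt_of_floor_lt (hn.2 hn.1.1)
    exact Real.rpow_le_one (by positivity) (div_le_one_of_le₀ hlt.le n.cast_nonneg) hε
  simp only [hscale, mul_left_comm (a _) _ _, ← Finset.mul_sum]
  gcongr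
  rw [← Finset.sum_sdiff hsub]
  gcongr
  calc ∑ n ∈ Finset.Icc 1 ⌊x⌋₊ \ Finset.Icc 1 ⌊x / q⌋₊, a n * (x / q / n) ^ ε
      ≤ ∑ n ∈ Finset.Icc 1 ⌊x⌋₊ \ Finset.Icc 1 ⌊x / q⌋₊, a n :=
        Finset.sum_le_sum fun n hn => mul_le_of_le_one_right (ha n) (htail n hn)
    _ ≤ summatory a ⌊x⌋₊ :=
        Finset.sum_le_sum_of_subset_of_nonneg Finset.sdiff_subset fun n _ _ => ha n

lemma sum_mul_rpow_le_of_growth (hq : 1 < q) (ha : ∀ n, 0 ≤ a n)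
    (hgrowth : ∀ N, c * summatory a (N / q) ≤ summatory a N) (hε : 0 ≤ ε)
    (hεc : (q : ℝ) ^ ε < c) {x : ℝ} (hx : 0 ≤ x) :
    ∑ n ∈ Finset.Icc 1 ⌊x⌋₊, a n * (x / n) ^ ε ≤
      (q : ℝ) ^ ε * c / (c - (q : ℝ) ^ ε) * summatory a ⌊x⌋₊ := by
  induction hN : ⌊x⌋₊ using Nat.strong_induction_on generalizing x with
  | _ N ih =>
    subst hN
    rcases Nat.eq_zero_or_pos ⌊x⌋₊ with h0 | hpos
    · simp [h0, summatory]
    set b := (q : ℝ) ^ ε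
    have hb : 0 < b := Real.rpow_pos_of_pos (by exact_mod_cast hq.pos) ε
    have hfloor : ⌊x / q⌋₊ = ⌊x⌋₊ / q := Nat.floor_div_natCast x q
    have hlt : ⌊x / q⌋₊ < ⌊x⌋₊ := hfloor ▸ Nat.div_lt_self hpos hq
    have hcb : 0 < c - b := sub_pos.2 hεc
    have hA := hgrowth ⌊x⌋₊
    -- The constant `K = b c / (c - b)` solves `b (1 + K / c) = K`.
    calc ∑ n ∈ Finset.Icc 1 ⌊x⌋₊, a n * (x / n) ^ ε
        ≤ b * (summatory a ⌊x⌋₊ + ∑ n ∈ Finset.Icc 1 ⌊x / q⌋₊, a n * (x / q / n) ^ ε) :=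
          sum_mul_rpow_le_add_sum_div hq.pos ha hε hx
      _ ≤ b * (summatory a ⌊x⌋₊ + b * c / (c - b) * summatory a ⌊x / q⌋₊) := by
          gcongr
          exact ih _ hlt (by positivity) rfl
      _ = b * (summatory a ⌊x⌋₊ + b / (c - b) * (c * summatory a (⌊x⌋₊ / q))) := by
          rw [hfloor]; ring
      _ ≤ b * (summatory a ⌊x⌋₊ + b / (c - b) * summatory a ⌊x⌋₊) := by
          gcongr
      _ = b * c / (c - b) * summatory a ⌊x⌋₊ := by
          have hne : c - b ≠ 0 := hcb.ne'
          field_simp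
          ring

lemma sum_mul_log_pow_le_of_growth (hq : 1 < q) (ha : ∀ n, 0 ≤ a n)
    (hgrowth : ∀ N, c * summatory a (N / q) ≤ summatory a N) (hε : 0 < ε)
    (hεc : (q : ℝ) ^ ε < c) (k N : ℕ) :
    ∑ n ∈ Finset.Icc 1 N, a n * Real.log ((N : ℝ) / n) ^ k ≤
      k.factorial / ε ^ k * ((q : ℝ) ^ ε * c / (c - (q : ℝ) ^ ε)) * summatory a N :=
  calc ∑ n ∈ Finset.Icc 1 N, a n * Real.log ((N : ℝ) / n) ^ k
      ≤ ∑ n ∈ Finset.Icc 1 N, a n * (k.factorial / ε ^ k * ((N : ℝ) / n) ^ ε) := by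
        gcongr with n hn
        · exact ha n
        · exact log_pow_le_factorial_div_mul_rpow (one_le_div_of_mem_Icc hn) hε k
    _ = k.factorial / ε ^ k * ∑ n ∈ Finset.Icc 1 N, a n * ((N : ℝ) / n) ^ ε := by
        simp only [mul_left_comm (a _), Finset.mul_sum]
    _ ≤ k.factorial / ε ^ k * ((q : ℝ) ^ ε * c / (c - (q : ℝ) ^ ε) * summatory a N) := by
        gcongr
        simpa only [Nat.floor_natCast] using
          sum_mul_rpow_le_of_growth hq ha hgrowth hε.le hεc N.cast_nonneg
    _ = _ := (mul_assoc _ _ _).symm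

lemma isBigO_sum_mul_log_pow_of_growth (hq : 1 < q) (hc : 1 < c)
    (ha : ∀ n, 0 ≤ a n) (hgrowth : ∀ N, c * summatory a (N / q) ≤ summatory a N) (k : ℕ) :
    (fun N : ℕ => ∑ n ∈ Finset.Icc 1 N, a n * Real.log ((N : ℝ) / n) ^ k)
      =O[⊤] summatory a := by
  obtain ⟨ε, hε, hεc⟩ := exists_pos_rpow_lt (q := q) (by exact_mod_cast hq) hc
  refine IsBigO.of_bound (k.factorial / ε ^ k * ((q : ℝ) ^ ε * c / (c - (q : ℝ) ^ ε)))
    (Eventually.of_forall fun N => ?_)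
  have hsum : 0 ≤ ∑ n ∈ Finset.Icc 1 N, a n * Real.log ((N : ℝ) / n) ^ k :=
    Finset.sum_nonneg fun n hn =>
      mul_nonneg (ha n) (pow_nonneg (Real.log_nonneg (one_le_div_of_mem_Icc hn)) k)
  rw [Real.norm_of_nonneg hsum, Real.norm_of_nonneg (summatory_nonneg ha N)]
  exact sum_mul_log_pow_le_of_growth hq ha hgrowth hε hεc k N

end Summatory

section Counting

variable {P : Set ℕ}

/-- The integer of which a list of elements of `P` is an ordered factorization. Lists are used
instead of the tuples of `af`, so that one type carries the factorizations of every length. -/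
def factorProd (l : List P) : ℕ := (l.map Subtype.val).prod

lemma factorProd_cons (r : P) (l : List P) : factorProd (r :: l) = r * factorProd l := by
  simp only [factorProd, List.map_cons, List.prod_cons]

lemma factorProd_ofFn {m : ℕ} (t : Fin m → P) : factorProd (List.ofFn t) = ∏ i, (t i : ℕ) := by
  simp only [factorProd, List.map_ofFn, List.prod_ofFn, Function.comp_apply]

lemma factorProd_pos (hP : ∀ n ∈ P, 0 < n) (l : List P) : 0 < factorProd l :=
  List.prod_pos fun n hn => by
    obtain ⟨r, -, rfl⟩ := List.mem_map.1 hn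
    exact hP r r.2

lemma finite_factorProd_le (hP : ∀ n ∈ P, 2 ≤ n) (N : ℕ) :
    {l : List P | factorProd l ≤ N}.Finite := by
  induction N using Nat.strong_induction_on with
  | _ N ih =>
    have hcover : {l : List P | factorProd l ≤ N} ⊆
        insert [] (⋃ r ∈ {r : P | (r : ℕ) ≤ N}, (r :: ·) '' {l | factorProd l ≤ N / r}) := by
      rintro (_ | ⟨r, l⟩) hl
      · exact Set.mem_insert _ _
      have hr : 0 < (r : ℕ) := two_pos.trans_le (hP r r.2)
      have hpos : 0 < factorProd l := factorProd_pos (fun n hn => two_pos.trans_le (hP n hn)) l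
      rw [Set.mem_ofPred_eq, factorProd_cons] at hl
      refine Set.mem_insert_of_mem _ (Set.mem_biUnion (x := r) ?_ ⟨l, ?_, rfl⟩)
      · exact (Nat.le_mul_of_pos_right _ hpos).trans hl
      · exact (Nat.le_div_iff_mul_le hr).2 (by rwa [mul_comm])
    have hfin : {r : P | (r : ℕ) ≤ N}.Finite :=
      (Set.finite_Iic N).preimage Subtype.val_injective.injOn
    refine ((hfin.biUnion fun r hr => ?_).insert []).subset hcover
    have hr2 : 2 ≤ (r : ℕ) := hP r r.2
    exact (ih _ (Nat.div_lt_self ((two_pos.trans_le hr2).trans_le hr) hr2)).image _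

lemma finite_factorProd_eq (hP : ∀ n ∈ P, 2 ≤ n) (n : ℕ) :
    Finite {l : List P // factorProd l = n} :=
  (finite_factorProd_le hP n).subset fun _ hl => le_of_eq hl

lemma af_eq_card_length_fiber (m n : ℕ) :
    af P m n = Nat.card {l : {l : List P // factorProd l = n} // l.1.length = m} := by
  refine Nat.card_eq_of_bijective
    (fun t => ⟨⟨List.ofFn fun i => (⟨t.1 i, t.2.1 i⟩ : P), (factorProd_ofFn _).trans t.2.2⟩,
      List.length_ofFn⟩) ⟨fun t t' h => ?_, ?_⟩
  · have hcoord := List.ofFn_injective (congrArg (·.1.1) h)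
    exact Subtype.ext (funext fun i => congrArg Subtype.val (congrFun hcoord i))
  · rintro ⟨⟨l, hl⟩, rfl⟩
    refine ⟨⟨fun i => l.get i, fun i => (l.get i).2, ?_⟩, ?_⟩
    · rw [← factorProd_ofFn, List.ofFn_get, hl]
    · simp

lemma aTot_eq_card (hP : ∀ n ∈ P, 2 ≤ n) (n : ℕ) :
    aTot P n = Nat.card {l : List P // factorProd l = n} := by
  have := finite_factorProd_eq hP n
  simp only [aTot, af_eq_card_length_fiber]
  exact tsum_card_fiber fun l : {l : List P // factorProd l = n} => l.1.length

lemma Acum_eq_card (hP : ∀ n ∈ P, 2 ≤ n) (N : ℕ) :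
    Acum P N = Nat.card {l : List P // factorProd l ≤ N} := by
  have hmem (l : List P) : factorProd l ≤ N ↔ factorProd l ∈ Finset.Icc 1 N := by
    have hpos := factorProd_pos (fun n hn => two_pos.trans_le (hP n hn)) l
    simp only [Finset.mem_Icc, Nat.succ_le_iff, hpos, true_and]
  have (n : ℕ) := finite_factorProd_eq hP n
  calc Acum P N = ∑ n ∈ Finset.Icc 1 N, (Nat.card {l : List P // factorProd l = n} : ℝ) :=
        Finset.sum_congr rfl fun n _ => aTot_eq_card hP n
    _ = Nat.card (Σ n : Finset.Icc 1 N, {l : List P // factorProd l = n}) := by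
        rw [Nat.card_sigma, Nat.cast_sum, Finset.sum_coe_sort (Finset.Icc 1 N)
          fun n => (Nat.card {l : List P // factorProd l = n} : ℝ)]
    _ = Nat.card {l : List P // factorProd l ≤ N} := by
        rw [Nat.card_congr (Equiv.sigmaSubtypeFiberEquivSubtype factorProd hmem)]

lemma sum_Acum_div_le (hP : ∀ n ∈ P, 2 ≤ n) (Q : Finset P) (N : ℕ) :
    ∑ r ∈ Q, Acum P (N / r) ≤ Acum P N := by
  have (M : ℕ) : Finite {l : List P // factorProd l ≤ M} := finite_factorProd_le hP M
  simp only [Acum_eq_card hP]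
  rw [← Finset.sum_coe_sort Q, ← Nat.cast_sum, ← Nat.card_sigma, Nat.cast_le]
  refine Nat.card_le_card_of_injective
    (fun x => ⟨x.1.1 :: x.2.1, ?_⟩ :
      (Σ r : Q, {l : List P // factorProd l ≤ N / r.1}) → {l : List P // factorProd l ≤ N}) ?_
  · rw [factorProd_cons]
    exact (Nat.mul_le_mul_left _ x.2.2).trans (Nat.mul_div_le N _)
  · rintro ⟨⟨r, hr⟩, l, hl⟩ ⟨⟨r', hr'⟩, l', hl'⟩ h
    obtain ⟨rfl, rfl⟩ := List.cons_eq_cons.1 (congrArg Subtype.val h)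
    rfl

lemma aTot_nonneg (n : ℕ) : 0 ≤ aTot P n := tsum_nonneg fun _ => Nat.cast_nonneg _

lemma card_mul_Acum_div_le (hP : ∀ n ∈ P, 2 ≤ n) (Q : Finset P) {q : ℕ} (hq : ∀ r ∈ Q, r ≤ q)
    (N : ℕ) : Q.card * Acum P (N / q) ≤ Acum P N :=
  calc Q.card * Acum P (N / q) = ∑ _ ∈ Q, Acum P (N / q) := by
        rw [Finset.sum_const, nsmul_eq_mul]
    _ ≤ ∑ r ∈ Q, Acum P (N / r) := Finset.sum_le_sum fun r hr =>
        summatory_mono aTot_nonneg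
          (Nat.div_le_div_left (hq r hr) (two_pos.trans_le (hP r r.2)))
    _ ≤ Acum P N := sum_Acum_div_le hP Q N

end Counting

theorem log_ratio_moments_bounded_general
    (P : Set ℕ) (hP : ∀ n ∈ P, 2 ≤ n) (hP2 : P.Nontrivial) (k : ℕ) :
    (fun N : ℕ =>
        (∑ n ∈ Finset.Icc 1 N, aTot P n * (Real.log ((N : ℝ) / n)) ^ k) / Acum P N)
      =O[atTop] fun _ : ℕ => (1 : ℝ) := by
  obtain ⟨p, hp, q, hq, hpq⟩ := hP2.exists_lt
  have hpair : (⟨p, hp⟩ : P) ≠ ⟨q, hq⟩ := fun h => hpq.ne (congrArg Subtype.val h)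
  have hgrowth (N : ℕ) : 2 * Acum P (N / q) ≤ Acum P N := by
    simpa [Finset.card_pair hpair] using
      card_mul_Acum_div_le hP {⟨p, hp⟩, ⟨q, hq⟩} (by simp [hpq.le]) N
  have hmoment := isBigO_sum_mul_log_pow_of_growth (hP q hq) one_lt_two aTot_nonneg hgrowth k
  exact (isBigO_one_iff ℝ).2 (div_isBoundedUnder_of_isBigO (hmoment.mono le_top))

/-- **Boundedness of the moments of `log N - log ν_N`.** Under the stated assumptions,
including non-periodicity, for each fixed `k ≥ 0`,
`(1/A(N)) Σ_{n ≤ N} a(n) (log(N/n))^k = O(1)` as `N → ∞`. -/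
theorem log_ratio_moments_bounded
    (P : Set ℕ) (hP : ∀ n ∈ P, 2 ≤ n) (hP2 : P.Nontrivial)
    (hκ : 1 < PvalE P (kappa P))
    (ρ : ℝ) (hρ0 : 0 < ρ) (hρκ : kappa P < (ρ : EReal)) (hρ1 : Pval P ρ = 1)
    (hnp : ∀ d : ℕ, 2 ≤ d → ¬ P ⊆ {n : ℕ | ∃ k : ℕ, 1 ≤ k ∧ n = d ^ k})
    (k : ℕ) :
    (fun N : ℕ =>
        (∑ n ∈ Finset.Icc 1 N, aTot P n * (Real.log ((N : ℝ) / n)) ^ k) / Acum P N)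
      =O[atTop] fun _ : ℕ => (1 : ℝ) := by
  exact log_ratio_moments_bounded_general P hP hP2 k
end
end
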